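/- Let t ≥ 3 and let p_0, p_1, …, p_{2^{t-2}-1} be polynomials in F_2[w_2,w_3], regarded as elements of F_2[w_2,w_3,w_4]. Then the sum Σ_{j=0}^{2^{t-2}-1} p_j·w_4^j belongs to I_{2^t,4} if and only if p_j belongs to I_{2^t,3} for every j ∈ {0,1,…,2^{t-2}-1}. -/

import Mathlib

open MvPolynomial

/-- The polynomials `g_r = g_r^{(4)}` in `F_2[w_2,w_3,w_4]` (variables `X 0 = w_2`,
`X 1 = w_3`, `X 2 = w_4`): `g_0 = 1`, `g_r = 0` for `r < 0`, and
`g_r = w_2·g_{r-2} + w_3·g_{r-3} + w_4·g_{r-4}` for `r ≥ 1`. -/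
noncomputable def g4 : ℤ → MvPolynomial (Fin 3) (ZMod 2)
  | r =>
    if r ≤ 0 then (if r = 0 then 1 else 0)
    else X 0 * g4 (r - 2) + X 1 * g4 (r - 3) + X 2 * g4 (r - 4)
  termination_by r => r.toNat
  decreasing_by all_goals omega

/-- The ideal `I_{n,4} = (g_{n-3}, g_{n-2}, g_{n-1}, g_n)` of `F_2[w_2,w_3,w_4]`. -/
noncomputable def I4 (n : ℤ) : Ideal (MvPolynomial (Fin 3) (ZMod 2)) :=
  Ideal.span {g4 (n - 3), g4 (n - 2), g4 (n - 1), g4 n}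

/-- The polynomials `g_r^{(3)}` in `F_2[w_2,w_3]` (variables `X 0 = w_2`, `X 1 = w_3`):
`g^{(3)}_0 = 1`, `g^{(3)}_r = 0` for `r < 0`, and
`g^{(3)}_r = w_2·g^{(3)}_{r-2} + w_3·g^{(3)}_{r-3}` for `r ≥ 1`. -/
noncomputable def g3 : ℤ → MvPolynomial (Fin 2) (ZMod 2)
  | r =>
    if r ≤ 0 then (if r = 0 then 1 else 0)
    else X 0 * g3 (r - 2) + X 1 * g3 (r - 3)
  termination_by r => r.toNat
  decreasing_by all_goals omega

/-- The ideal `I_{n,3} = (g^{(3)}_{n-2}, g^{(3)}_{n-1}, g^{(3)}_n)` of `F_2[w_2,w_3]`. -/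
noncomputable def I3 (n : ℤ) : Ideal (MvPolynomial (Fin 2) (ZMod 2)) :=
  Ideal.span {g3 (n - 2), g3 (n - 1), g3 n}

/-- The natural inclusion `F_2[w_2,w_3] ⊆ F_2[w_2,w_3,w_4]`. -/
noncomputable def incl : MvPolynomial (Fin 2) (ZMod 2) →+* MvPolynomial (Fin 3) (ZMod 2) :=
  (rename (Fin.castSucc : Fin 2 → Fin 3)).toRingHom

lemma rec_aux {R : Type*} [CommRing R] (h2 : (2:R) = 0) (a b c : R) (G : ℤ → R)
    (hG : ∀ r : ℤ, 1 ≤ r → G r = a * G (r-2) + b * G (r-3) + c * G (r-4)) (s : ℕ) :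
    ∀ r : ℤ, 4 * 2^s - 3 ≤ r → G r = a^(2^s) * G (r - 2*2^s) + b^(2^s) * G (r-3*2^s)
      + c^(2^s) * G (r-4*2^s) := by
  induction s with
  | zero => intro r hr; simpa using hG r (by simpa using hr)
  | succ s ih =>
    intro r hr
    have hq : (1:ℤ) ≤ 2^s := one_le_pow₀ (by norm_num)
    have e : ∀ x : R, x^(2^(s+1)) = x^(2^s) * x^(2^s) := fun x => by
      rw [← pow_add]; congr 1; ring
    simp only [e]
    rw [pow_succ] at hr ⊢
    generalize (2:ℤ)^s = q at *
    rw [ih r (by linarith), ih (r-2*q) (by linarith), ih (r-3*q) (by linarith),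
      ih (r-4*q) (by linarith)]
    generalize a^(2^s) = A at *
    generalize b^(2^s) = B at *
    generalize c^(2^s) = C at *
    ring_nf
    linear_combination (A * B * G (r - q*5) + A * C * G (r - q*6) + B * C * G (r - q*7)) * h2

lemma two_zero (n : ℕ) : (2 : MvPolynomial (Fin n) (ZMod 2)) = 0 := by
  have : (2 : MvPolynomial (Fin n) (ZMod 2)) = C 2 := (map_ofNat C 2).symm
  rw [this]
  have : (2 : ZMod 2) = 0 := by decide
  rw [this]; simp

lemma g4_rec (r : ℤ) (hr : 1 ≤ r) :
    g4 r = X 0 * g4 (r-2) + X 1 * g4 (r-3) + X 2 * g4 (r-4) := by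
  rw [g4, if_neg (by omega)]

lemma g3_rec (r : ℤ) (hr : 1 ≤ r) :
    g3 r = X 0 * g3 (r-2) + X 1 * g3 (r-3) := by
  rw [g3, if_neg (by omega)]

lemma g4_neg (r : ℤ) (hr : r < 0) : g4 r = 0 := by
  rw [g4, if_pos (by omega), if_neg (by omega)]

lemma g3_neg (r : ℤ) (hr : r < 0) : g3 r = 0 := by
  rw [g3, if_pos (by omega), if_neg (by omega)]

lemma g4_zero : g4 0 = 1 := by rw [g4]; simp

lemma g3_zero : g3 0 = 1 := by rw [g3]; simp

lemma incl_X0 : incl (X 0) = X 0 := by simp [incl]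

lemma incl_X1 : incl (X 1) = X 1 := by simp [incl]

lemma g4_step (s : ℕ) (i : ℤ) (hi : 1 ≤ i) (hi' : i ≤ 3) :
    g4 (2^(s+2) - i) = X 0 ^(2^s) * g4 (2^(s+1) - i) + X 1 ^ (2^s) * g4 (2^s - i) := by
  have := rec_aux (two_zero 3) (X 0) (X 1) (X 2) g4 g4_rec s (2^(s+2) - i)
    (by rw [pow_add]; linarith)
  rw [this, g4_neg (2^(s+2) - i - 4*2^s) (by rw [pow_add]; linarith)]
  rw [show (2:ℤ)^(s+2) - i - 2*2^s = 2^(s+1) - i by ring,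
    show (2:ℤ)^(s+2) - i - 3*2^s = 2^s - i by ring]
  ring

lemma g3_step (s : ℕ) (i : ℤ) (hi : 1 ≤ i) (hi' : i ≤ 3) :
    g3 (2^(s+2) - i) = X 0 ^(2^s) * g3 (2^(s+1) - i) + X 1 ^ (2^s) * g3 (2^s - i) := by
  have := rec_aux (two_zero 2) (X 0) (X 1) 0 g3
    (fun r hr => by rw [g3_rec r hr]; ring) s (2^(s+2) - i)
    (by rw [pow_add]; linarith)
  rw [this, g3_neg (2^(s+2) - i - 4*2^s) (by rw [pow_add]; linarith)]
  rw [show (2:ℤ)^(s+2) - i - 2*2^s = 2^(s+1) - i by ring,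
    show (2:ℤ)^(s+2) - i - 3*2^s = 2^s - i by ring]
  ring

lemma g_small (r : ℤ) (hr : r ≤ 1) : g4 r = incl (g3 r) := by
  rcases lt_trichotomy r 0 with h | h | h
  · rw [g4_neg r h, g3_neg r h, map_zero]
  · rw [h, g4_zero, g3_zero, map_one]
  · rw [g4_rec r h, g3_rec r h, g4_neg _ (by omega), g4_neg _ (by omega), g4_neg _ (by omega),
      g3_neg _ (by omega), g3_neg _ (by omega)]
    simp

lemma g_eq (i : ℤ) (hi : 1 ≤ i) (hi' : i ≤ 3) (s : ℕ) :
    g4 (2^s - i) = incl (g3 (2^s - i)) ∧ g4 (2^(s+1) - i) = incl (g3 (2^(s+1) - i)) := by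
  induction s with
  | zero => exact ⟨g_small _ (by norm_num; omega), g_small _ (by norm_num; omega)⟩
  | succ s ih =>
    refine ⟨ih.2, ?_⟩
    rw [show s + 1 + 1 = s + 2 from rfl, g4_step s i hi hi', g3_step s i hi hi', ih.1, ih.2]
    simp only [map_add, map_mul, map_pow, incl_X0, incl_X1]

lemma g3_van (s : ℕ) : g3 (2^s - 3) = 0 ∧ g3 (2^(s+1) - 3) = 0 := by
  induction s with
  | zero => exact ⟨g3_neg _ (by norm_num), g3_neg _ (by norm_num)⟩
  | succ s ih =>
    refine ⟨ih.2, ?_⟩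
    rw [show s + 1 + 1 = s + 2 from rfl, g3_step s 3 (by norm_num) (by norm_num), ih.1, ih.2]
    simp

lemma coeff_aux {S : Type*} [CommRing S] (a b : S) (G : ℤ → Polynomial S)
    (hG : ∀ r : ℤ, 1 ≤ r → G r = Polynomial.C a * G (r-2) + Polynomial.C b * G (r-3)
      + Polynomial.X * G (r-4))
    (h0 : G 0 = 1) (hneg : ∀ r < 0, G r = 0) (m : ℕ) :
    ∀ r : ℤ, r ≤ m → (∀ k : ℕ, r < 4 * k → (G r).coeff k = 0) ∧
      ∀ k : ℕ, r = 4 * k → (G r).coeff k = 1 := by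
  have base : ∀ r : ℤ, r ≤ 0 → (∀ k : ℕ, r < 4 * k → (G r).coeff k = 0) ∧
      ∀ k : ℕ, r = 4 * k → (G r).coeff k = 1 := by
    intro r hr
    rcases hr.lt_or_eq with h | h
    · rw [hneg r h]; exact ⟨by simp, fun k hk => by omega⟩
    · rw [h, h0]
      refine ⟨fun k hk => ?_, fun k hk => ?_⟩
      · rw [Polynomial.coeff_one, if_neg (by omega)]
      · rw [Polynomial.coeff_one, if_pos (by omega)]
  induction m with
  | zero => intro r hr; exact base r (by simpa using hr)
  | succ m ih =>
    intro r hr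
    by_cases h : r ≤ 0
    · exact base r h
    push_cast at hr
    rw [hG r (by omega)]
    refine ⟨fun k hk => ?_, fun k hk => ?_⟩ <;> obtain _ | k := k
    · push_cast at hk; omega
    · push_cast at hk
      rw [Polynomial.coeff_add, Polynomial.coeff_add, Polynomial.coeff_C_mul,
        Polynomial.coeff_C_mul, Polynomial.coeff_X_mul,
        (ih (r-2) (by omega)).1 _ (by push_cast; omega),
        (ih (r-3) (by omega)).1 _ (by push_cast; omega), (ih (r-4) (by omega)).1 k (by omega)]
      simp
    · push_cast at hk; omega
    · push_cast at hk
      rw [Polynomial.coeff_add, Polynomial.coeff_add, Polynomial.coeff_C_mul,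
        Polynomial.coeff_C_mul, Polynomial.coeff_X_mul,
        (ih (r-2) (by omega)).1 _ (by push_cast; omega),
        (ih (r-3) (by omega)).1 _ (by push_cast; omega), (ih (r-4) (by omega)).2 k (by omega)]
      simp

lemma I3_le (t : ℕ) (x : MvPolynomial (Fin 2) (ZMod 2)) (hx : x ∈ I3 (2^t)) :
    incl x ∈ I4 (2^t) := by
  have h : I3 (2^t) ≤ (I4 (2^t)).comap incl := by
    have e2 : incl (g3 (2^t - 2)) ∈ I4 (2^t) := by
      rw [← (g_eq 2 (by norm_num) (by norm_num) t).1]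
      exact Ideal.subset_span (by simp)
    rw [I3, Ideal.span_le]
    rintro y (rfl | rfl | rfl)
    · exact e2
    · show incl _ ∈ I4 (2^t)
      rw [← (g_eq 1 (by norm_num) (by norm_num) t).1]
      exact Ideal.subset_span (by simp)
    · show incl _ ∈ I4 (2^t)
      rw [g3_rec _ (one_le_pow₀ (by norm_num)), (g3_van t).1, mul_zero, add_zero, map_mul]
      exact Ideal.mul_mem_left _ _ e2
  exact h hx

/-- Lemma 2.6: for `t ≥ 3` and `p_0, …, p_{2^{t-2}-1} ∈ F_2[w_2,w_3]`, the sum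
`Σ_j p_j w_4^j` lies in `I_{2^t,4}` iff every `p_j` lies in `I_{2^t,3}`. -/
theorem stmt3 (t : ℕ) (ht : 3 ≤ t) (p : ℕ → MvPolynomial (Fin 2) (ZMod 2)) :
    (∑ j ∈ Finset.range (2 ^ (t - 2)), incl (p j) * X 2 ^ j) ∈ I4 (2 ^ t) ↔
      ∀ j < 2 ^ (t - 2), p j ∈ I3 (2 ^ t) := by
  constructor
  · intro h j hj
    set Q := MvPolynomial (Fin 2) (ZMod 2) ⧸ I3 (2^t)
    let mk : MvPolynomial (Fin 2) (ZMod 2) →+* Q := Ideal.Quotient.mk (I3 (2^t))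
    let Φ : MvPolynomial (Fin 3) (ZMod 2) →+* Polynomial Q :=
      eval₂Hom (Polynomial.C.comp (mk.comp MvPolynomial.C))
        ![Polynomial.C (mk (X 0)), Polynomial.C (mk (X 1)), Polynomial.X]
    have hΦ : ∀ x, Φ (incl x) = Polynomial.C (mk x) := by
      intro x
      have : Φ.comp incl = Polynomial.C.comp mk := by
        apply MvPolynomial.ringHom_ext
        · intro r; simp [Φ, incl]
        · intro i; fin_cases i <;> simp [Φ, incl]
      exact congrArg (fun f => f x) this
    have hX : Φ (X 2) = Polynomial.X := by simp [Φ]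
    have hX0 : Φ (X 0) = Polynomial.C (mk (X 0)) := by simp [Φ]
    have hX1 : Φ (X 1) = Polynomial.C (mk (X 1)) := by simp [Φ]
    have hc := coeff_aux (mk (X 0)) (mk (X 1)) (fun r => Φ (g4 r))
      (fun r hr => by simp only [g4_rec r hr, map_add, map_mul, hX, hX0, hX1])
      (by simp [g4_zero]) (fun r hr => by simp [g4_neg r hr]) (2^t) (2^t) (by simp)
    have hN : (2:ℤ)^t = 4 * ((2^(t-2) : ℕ) : ℤ) := by
      obtain ⟨u, rfl⟩ := Nat.exists_eq_add_of_le ht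
      rw [show 3 + u - 2 = u + 1 by omega]; push_cast; ring
    generalize 2^(t-2) = N at *
    have hd : Φ (g4 (2^t)) ∣ Φ (∑ j ∈ Finset.range N, incl (p j) * X 2 ^ j) := by
      refine (Ideal.mem_span_singleton (α := Polynomial Q)).1 ?_
      have hle : I4 (2^t) ≤ (Ideal.span {Φ (g4 (2^t))}).comap Φ := by
        rw [I4, Ideal.span_le]
        rintro y (rfl | rfl | rfl | rfl) <;> show Φ _ ∈ Ideal.span {Φ (g4 (2^t))}
        · rw [(g_eq 3 (by norm_num) (by norm_num) t).1, (g3_van t).1]; simp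
        · rw [(g_eq 2 (by norm_num) (by norm_num) t).1, hΦ,
            show mk (g3 (2^t-2)) = 0 from
              Ideal.Quotient.eq_zero_iff_mem.2 (Ideal.subset_span (by simp))]
          simp
        · rw [(g_eq 1 (by norm_num) (by norm_num) t).1, hΦ,
            show mk (g3 (2^t-1)) = 0 from
              Ideal.Quotient.eq_zero_iff_mem.2 (Ideal.subset_span (by simp))]
          simp
        · exact Ideal.subset_span rfl
      exact hle h
    have hs : Φ (∑ j ∈ Finset.range N, incl (p j) * X 2 ^ j)
        = ∑ j ∈ Finset.range N, Polynomial.C (mk (p j)) * Polynomial.X ^ j := by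
      simp only [map_sum, map_mul, map_pow, hΦ, hX]
    rw [hs] at hd
    have hco : ∀ k, (∑ j ∈ Finset.range N, Polynomial.C (mk (p j)) * Polynomial.X ^ j).coeff k
        = if k < N then mk (p k) else 0 := by
      intro k
      simp [Polynomial.finsetSum_coeff, Polynomial.coeff_C_mul, Polynomial.coeff_X_pow]
    have hdeg : (Φ (g4 (2^t))).natDegree ≤ N :=
      Polynomial.natDegree_le_iff_coeff_eq_zero.2 fun k hk => hc.1 k (by omega)
    have hmon : (Φ (g4 (2^t))).Monic :=
      Polynomial.monic_of_natDegree_le_of_coeff_eq_one N hdeg (hc.2 N hN)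
    apply Ideal.Quotient.eq_zero_iff_mem.1
    show mk (p j) = 0
    rcases subsingleton_or_nontrivial Q with hQ | hQ
    · exact Subsingleton.elim _ _
    have hdeg' : (N : WithBot ℕ) ≤ (Φ (g4 (2^t))).degree := by
      apply Polynomial.le_degree_of_ne_zero
      have := hc.2 N hN
      rw [this]; exact one_ne_zero
    by_contra hne
    refine hmon.not_dvd_of_degree_lt ?_ (lt_of_lt_of_le ?_ hdeg') hd
    · intro h0
      have := hco j
      rw [h0, if_pos hj] at this
      exact hne (by simpa using this.symm)
    · rw [Polynomial.degree_lt_iff_coeff_zero]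
      intro m hm
      rw [hco, if_neg (by omega)]
  · intro h
    refine Ideal.sum_mem _ fun j hj => Ideal.mul_mem_right _ _ (I3_le t _ (h j ?_))
    exact Finset.mem_range.1 hj
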